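/- Let k ≥ l ≥ 1 and let U_l^k = {τ ∈ S_k : τ(i) = i for all i with l < i ≤ k}. Let E = Σ_{j=0}^{l−1} C_j·X^j ∈ ℚ⟦X⟧, where C_j is the j-th Catalan number, and define R_{0;E} = E and R_{m+1;E} = (1 − X·R_{m;E})⁻¹ in ℚ⟦X⟧. Then Σ_{n≥0} |{π ∈ S_n : π avoids 132 and every pattern in U_l^k}|·Xⁿ = R_{k−l;E}. -/

import Mathlib

/-- A pattern is a permutation of `{1,…,k}` for some `k`. -/
def Pattern : Type := Σ k : ℕ, Equiv.Perm (Fin k)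

/-- `IsOccurrence τ π f` says that the strictly increasing tuple of indices `f` is an
occurrence of the pattern `τ` in the permutation `π`, i.e. `π ∘ f` is order-isomorphic
to `τ`. -/
def IsOccurrence {k n : ℕ} (τ : Equiv.Perm (Fin k)) (π : Equiv.Perm (Fin n))
    (f : Fin k → Fin n) : Prop :=
  StrictMono f ∧ ∀ a b : Fin k, τ a < τ b ↔ π (f a) < π (f b)

/-- `π` contains the pattern `τ` (at least once). -/
def Contains {k n : ℕ} (τ : Equiv.Perm (Fin k)) (π : Equiv.Perm (Fin n)) : Prop :=
  ∃ f : Fin k → Fin n, IsOccurrence τ π f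

/-- `π` contains the pattern `τ` exactly once. -/
def ContainsOnce {k n : ℕ} (τ : Equiv.Perm (Fin k)) (π : Equiv.Perm (Fin n)) : Prop :=
  ∃! f : Fin k → Fin n, IsOccurrence τ π f

/-- `π` avoids every pattern in the set `T`. -/
def AvoidsSet {n : ℕ} (T : Set Pattern) (π : Equiv.Perm (Fin n)) : Prop :=
  ∀ p ∈ T, ¬ Contains p.2 π

/-- `f_T(n)`: the number of permutations of `{1,…,n}` avoiding every pattern in `T`. -/
noncomputable def avoidCount (T : Set Pattern) (n : ℕ) : ℕ :=
  Nat.card {π : Equiv.Perm (Fin n) // AvoidsSet T π}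

/-- The pattern `132 ∈ S₃` (zero-indexed: `0 ↦ 0, 1 ↦ 2, 2 ↦ 1`). -/
noncomputable def p132 : Equiv.Perm (Fin 3) := Equiv.ofBijective ![0, 2, 1] (by decide)

/-- The continued fraction `R_{m;E}`: `R_{0;E} = E`, `R_{m+1;E} = (1 − X·R_{m;E})⁻¹`. -/
noncomputable def Rcf (E : PowerSeries ℚ) : ℕ → PowerSeries ℚ
  | 0 => E
  | m + 1 => (1 - PowerSeries.X * Rcf E m)⁻¹

/-- `E = Σ_{j=0}^{l−1} C_j X^j`, the `l`-truncated Catalan generating function. -/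
noncomputable def catE (l : ℕ) : PowerSeries ℚ :=
  ∑ j ∈ Finset.range l, PowerSeries.C (catalan j : ℚ) * PowerSeries.X ^ j

/-- `U_l^k`: the permutations `τ ∈ S_k` (zero-indexed on `Fin k`) fixing all positions
`i` with `l ≤ i < k` (one-indexed: `τ(i) = i` for `l < i ≤ k`). -/
def Ulk (l k : ℕ) : Set (Equiv.Perm (Fin k)) := {τ | ∀ i : Fin k, l ≤ (i : ℕ) → τ i = i}


namespace Aux7

open List

/-- A list of naturals avoids 132. -/
def Av (L : List ℕ) : Prop := ∀ x y z, [x, y, z] <+ L → ¬ (x < z ∧ z < y)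

/-- A list of length `l + m` order isomorphic to a member of `U_l^{l+m}`. -/
def Pat (l : ℕ) : ℕ → List ℕ → Prop
  | 0, S => S.length = l
  | m + 1, S => ∃ S' x, S = S' ++ [x] ∧ Pat l m S' ∧ ∀ y ∈ S', y < x

def Bad (l m : ℕ) (L : List ℕ) : Prop := ∃ S, S <+ L ∧ Pat l m S

theorem bad_glue (l m : ℕ) (A B : List ℕ) (M : ℕ) (hA : ∀ x ∈ A, x < M) (hB : ∀ x ∈ B, x < M)
    (hAB : ∀ x ∈ A, ∀ y ∈ B, y < x) :
    Bad l (m + 1) (A ++ M :: B) ↔ Bad l m A ∨ Bad l (m + 1) B := by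
  constructor
  · rintro ⟨S, hS, S', x, rfl, hP, hx⟩
    obtain ⟨P, Q, hPQ, hPA, hQ⟩ := List.sublist_append_iff.1 hS
    rcases List.eq_nil_or_concat Q with rfl | ⟨Q', x', rfl⟩
    · left
      refine ⟨S', ?_, hP⟩
      rw [List.append_nil] at hPQ
      rw [← hPQ] at hPA
      exact (List.sublist_append_left _ _).trans hPA
    · rw [List.concat_eq_append, ← List.append_assoc] at hPQ
      obtain ⟨rfl, h2⟩ := List.append_inj' hPQ rfl
      obtain rfl : x = x' := by simpa using h2
      rw [List.concat_eq_append] at hQ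
      have hxm : x ∈ M :: B := hQ.subset (by simp)
      rcases List.mem_cons.1 hxm with rfl | hxB
      · left
        refine ⟨P ++ Q', ?_, hP⟩
        cases Q' with
        | nil => simpa using hPA
        | cons q Q'' =>
          exfalso
          have hq : q < x := hx q (by simp)
          rcases List.sublist_cons_iff.1 hQ with h | ⟨r, h, h'⟩
          · have := hB x (h.subset (by simp)); omega
          · simp at h; omega
      · right
        have hxM := hB x hxB
        cases P with
        | cons p P' =>
          exfalso
          have h1 := hx p (by simp)
          have h2 := hAB p (hPA.subset (by simp)) x hxB
          omega
        | nil =>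
          refine ⟨Q' ++ [x], ?_, ?_⟩
          · rcases List.sublist_cons_iff.1 hQ with h | ⟨r, h, h'⟩
            · exact h
            · exfalso
              have : M ∈ Q' ++ [x] := by rw [h]; simp
              rcases List.mem_append.1 this with h3 | h3
              · have := hx M (by simpa using h3); omega
              · simp at h3; omega
          · exact ⟨Q', x, rfl, by simpa using hP, by simpa using hx⟩
  · rintro (⟨S, hS, hP⟩ | ⟨S, hS, hP⟩)
    · exact ⟨S ++ [M], List.Sublist.append hS (by simp), S, M, rfl, hP,
        fun y hy => hA y (hS.subset hy)⟩
    · exact ⟨S, hS.trans ((List.sublist_cons_self _ _).trans (List.sublist_append_right _ _)), hP⟩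

theorem av_glue (A B : List ℕ) (M : ℕ) (hA : ∀ x ∈ A, x < M) (hB : ∀ x ∈ B, x < M)
    (hAB : ∀ x ∈ A, ∀ y ∈ B, y < x) : Av (A ++ M :: B) ↔ Av A ∧ Av B := by
  constructor
  · intro h
    exact ⟨fun x y z hs => h x y z (hs.trans (List.sublist_append_left _ _)),
      fun x y z hs => h x y z (hs.trans
        ((List.sublist_cons_self _ _).trans (List.sublist_append_right _ _)))⟩
  · rintro ⟨h1, h2⟩ x y z hs ⟨hxz, hzy⟩
    obtain ⟨P, Q, hPQ, hPA, hQ⟩ := List.sublist_append_iff.1 hs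
    have key : ∀ w ∈ Q, w = M ∨ w ∈ B := fun w hw => List.mem_cons.1 (hQ.subset hw)
    match P, hPQ, hPA with
    | [], hPQ, _ =>
      simp at hPQ
      subst hPQ
      have := key y (by simp)
      rcases List.sublist_cons_iff.1 hQ with h | ⟨r, h, h'⟩
      · exact h2 x y z h ⟨hxz, hzy⟩
      · simp at h
        obtain ⟨rfl, rfl⟩ := h
        have := hB z (h'.subset (by simp))
        omega
    | [p], hPQ, hPA =>
      simp at hPQ
      obtain ⟨rfl, rfl⟩ := hPQ
      have hx := hPA.subset (List.mem_singleton.2 rfl)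
      have hxM := hA x hx
      rcases key y (by simp) with rfl | hy
      · rcases key z (by simp) with rfl | hz
        · omega
        · have := hAB x hx z hz; omega
      · have := hAB x hx y hy; omega
    | [p, q], hPQ, hPA =>
      simp at hPQ
      obtain ⟨rfl, rfl, rfl⟩ := hPQ
      have hx := hPA.subset (by simp : x ∈ [x, y])
      have hy := hA y (hPA.subset (by simp : y ∈ [x, y]))
      rcases key z (by simp) with rfl | hz
      · omega
      · have := hAB x hx z hz; omega
    | p :: q :: r :: P', hPQ, hPA =>
      simp at hPQ
      obtain ⟨rfl, rfl, rfl, rfl, rfl⟩ := hPQ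
      exact h1 x y z hPA ⟨hxz, hzy⟩

open Classical in
/-- 132-avoiding arrangements of `c, …, c+n-1` satisfying `P`. -/
noncomputable def W (P : List ℕ → Prop) (c n : ℕ) : Finset (List ℕ) :=
  (List.range' c n).permutations.toFinset.filter fun L => Av L ∧ P L

theorem mem_W {P : List ℕ → Prop} {c n : ℕ} {L : List ℕ} :
    L ∈ W P c n ↔ L ~ List.range' c n ∧ Av L ∧ P L := by
  simp [W]

theorem split_perm (c n : ℕ) (A B : List ℕ) (h : A ++ B ~ List.range' c n)
    (hAB : ∀ x ∈ A, ∀ y ∈ B, y < x) :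
    A ~ List.range' (c + B.length) A.length ∧ B ~ List.range' c B.length := by
  have hlen : B.length + A.length = n := by
    have := h.length_eq
    simp at this; omega
  have hp : B.insertionSort (· ≤ ·) ++ A.insertionSort (· ≤ ·) ~ List.range' c n :=
    (List.Perm.append (List.perm_insertionSort _ _) (List.perm_insertionSort _ _)).trans
      (List.perm_append_comm.trans h)
  have he := List.Perm.eq_of_pairwise' (r := (· ≤ ·)) ?_ (List.pairwise_le_range' _) hp
  · rw [← hlen, ← List.range'_append_1] at he
    obtain ⟨h1, h2⟩ := List.append_inj he (by simp)
    exact ⟨h2 ▸ (List.perm_insertionSort _ _).symm, h1 ▸ (List.perm_insertionSort _ _).symm⟩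
  · rw [List.pairwise_append]
    refine ⟨List.pairwise_insertionSort _ _, List.pairwise_insertionSort _ _, ?_⟩
    intro b hb a ha
    exact (hAB a ((List.mem_insertionSort _).1 ha) b ((List.mem_insertionSort _).1 hb)).le

/-- Hypothesis on predicates compatible with the decomposition. -/
def Compat (P Q : List ℕ → Prop) : Prop :=
  ∀ (A B : List ℕ) (M : ℕ), (∀ x ∈ A, x < M) → (∀ x ∈ B, x < M) →
    (∀ x ∈ A, ∀ y ∈ B, y < x) → (P (A ++ M :: B) ↔ Q A ∧ P B)

theorem W_succ (P Q : List ℕ → Prop) (hPQ : Compat P Q) (c n : ℕ) :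
    W P c (n + 1) = (Finset.HasAntidiagonal.antidiagonal n).biUnion fun p =>
      (W Q (c + p.2) p.1 ×ˢ W P c p.2).image fun q => q.1 ++ (c + n) :: q.2 := by
  ext L
  simp only [Finset.mem_biUnion, Finset.HasAntidiagonal.mem_antidiagonal, Finset.mem_image, Finset.mem_product,
    mem_W, Prod.exists]
  constructor
  · rintro ⟨hL, hAv, hP⟩
    have hM : c + n ∈ L := hL.mem_iff.2 (by simp)
    obtain ⟨A, B, rfl⟩ := List.append_of_mem hM
    have hp : A ++ B ~ List.range' c n := by
      rw [List.range'_concat] at hL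
      have h1 := List.perm_middle.symm.trans hL
      have h2 := h1.trans List.perm_append_comm
      simpa using h2
    have hlt : ∀ x ∈ A ++ B, x < c + n := by
      intro x hx
      have := hp.mem_iff.1 hx
      simp at this; omega
    have hA : ∀ x ∈ A, x < c + n := fun x hx => hlt x (by simp [hx])
    have hB : ∀ x ∈ B, x < c + n := fun x hx => hlt x (by simp [hx])
    have hnd : (A ++ B).Nodup := hp.nodup_iff.2 (List.nodup_range' ..)
    have hAB : ∀ x ∈ A, ∀ y ∈ B, y < x := by
      intro x hx y hy
      have h1 := hAv x (c + n) y (List.Sublist.append (List.singleton_sublist.2 hx)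
        ((List.singleton_sublist.2 hy).cons_cons _))
      have h2 : x ≠ y := (List.nodup_append.1 hnd).2.2 x hx y hy
      have h3 := hB y hy
      omega
    have hs := split_perm c n A B hp hAB
    have hAv' := (av_glue A B _ hA hB hAB).1 hAv
    have hP' := (hPQ A B _ hA hB hAB).1 hP
    refine ⟨A.length, B.length, ?_, A, B, ⟨⟨hs.1, hAv'.1, hP'.1⟩, hs.2, hAv'.2, hP'.2⟩, rfl⟩
    have := hp.length_eq
    simpa using this
  · rintro ⟨a, b, rfl, A, B, ⟨⟨hA, hAvA, hQA⟩, hB, hAvB, hPB⟩, rfl⟩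
    have hA1 : ∀ x ∈ A, c + b ≤ x ∧ x < c + (a + b) := by
      intro x hx
      have := hA.mem_iff.1 hx
      simp at this; omega
    have hB1 : ∀ x ∈ B, x < c + b := by
      intro x hx
      have := hB.mem_iff.1 hx
      simp at this; omega
    have h1 : ∀ x ∈ A, x < c + (a + b) := fun x hx => (hA1 x hx).2
    have h2 : ∀ x ∈ B, x < c + (a + b) := fun x hx => by have := hB1 x hx; omega
    have h3 : ∀ x ∈ A, ∀ y ∈ B, y < x := fun x hx y hy => by
      have := hB1 y hy; have := hA1 x hx; omega
    refine ⟨?_, (av_glue A B _ h1 h2 h3).2 ⟨hAvA, hAvB⟩, (hPQ A B _ h1 h2 h3).2 ⟨hQA, hPB⟩⟩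
    refine List.perm_middle.trans ?_
    rw [List.range'_concat]
    refine List.Perm.trans ?_ List.perm_append_comm
    simp only [one_mul, List.singleton_append]
    refine List.Perm.cons _ ?_
    refine List.perm_append_comm.trans ?_
    rw [add_comm a b, ← List.range'_append_1]
    exact hB.append hA

theorem card_W_succ (P Q : List ℕ → Prop) (hPQ : Compat P Q) (c n : ℕ) :
    (W P c (n + 1)).card =
      ∑ p ∈ Finset.HasAntidiagonal.antidiagonal n, (W Q (c + p.2) p.1).card * (W P c p.2).card := by
  have hlen : ∀ {R : List ℕ → Prop} {c n : ℕ} {L : List ℕ}, L ∈ W R c n → L.length = n := by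
    intro R c n L h
    simpa using (mem_W.1 h).1.length_eq
  rw [W_succ P Q hPQ, Finset.card_biUnion]
  · refine Finset.sum_congr rfl fun p _ => ?_
    rw [Finset.card_image_of_injOn, Finset.card_product]
    rintro ⟨A, B⟩ h ⟨A', B'⟩ h' he
    simp only [Finset.coe_product, Set.mem_prod, Finset.mem_coe] at h h'
    obtain ⟨e1, e2⟩ := List.append_inj he (by rw [hlen h.1, hlen h'.1])
    simp at e2
    exact Prod.ext e1 e2
  · rintro ⟨a, b⟩ hp ⟨a', b'⟩ hp' hne
    rw [Function.onFun, Finset.disjoint_left]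
    rintro L h h'
    simp only [Finset.mem_image, Finset.mem_product, Prod.exists] at h h'
    obtain ⟨A, B, ⟨h1, h2⟩, rfl⟩ := h
    obtain ⟨A', B', ⟨h1', h2'⟩, he⟩ := h'
    apply hne
    have hm : ∀ {R : List ℕ → Prop} {d e : ℕ} {T : List ℕ}, T ∈ W R d e → d + e ≤ c + n →
        c + n ∉ T := by
      intro R d e T h hle hmem
      have := (mem_W.1 h).1.mem_iff.1 hmem
      simp at this; omega
    simp only [Finset.mem_coe, Finset.HasAntidiagonal.mem_antidiagonal] at hp hp'
    have i1 := hm h1 (by omega)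
    have i1' := hm h1' (by omega)
    have i2 := hm h2 (by omega)
    have i2' := hm h2' (by omega)
    have : A' = A := by
      have e := congrArg (fun T => T.takeWhile (· ≠ c + n)) he
      beta_reduce at e
      rw [List.takeWhile_append_of_pos, List.takeWhile_append_of_pos] at e
      · simpa using e
      · intro x hx; simp; rintro rfl; exact i1 hx
      · intro x hx; simp; rintro rfl; exact i1' hx
    have ha : a = a' := by rw [← hlen h1, ← hlen h1', this]
    subst ha
    simp; omega

theorem card_W_zero (P : List ℕ → Prop) (c : ℕ) (hP : P []) : (W P c 0).card = 1 := by
  have : W P c 0 = {[]} := by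
    ext L
    rw [mem_W]
    simp only [List.range'_zero, List.perm_nil, Finset.mem_singleton]
    constructor
    · exact fun h => h.1
    · rintro rfl
      exact ⟨rfl, by intro x y z h; simp at h, hP⟩
  simp [this]

theorem card_W_true (n : ℕ) : ∀ c, (W (fun _ => True) c n).card = catalan n := by
  induction n using Nat.strong_induction_on with
  | _ n ih =>
    intro c
    cases n with
    | zero => simp [card_W_zero]
    | succ n =>
      rw [card_W_succ _ (fun _ => True) (by intro A B M _ _ _; simp), catalan_succ']
      refine Finset.sum_congr rfl fun p hp => ?_
      rw [Finset.HasAntidiagonal.mem_antidiagonal] at hp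
      rw [ih _ (by omega), ih _ (by omega)]

theorem card_W_bad_zero (l c n : ℕ) :
    (W (fun L => ¬ Bad l 0 L) c n).card = if n < l then catalan n else 0 := by
  have hlen : ∀ {L : List ℕ}, L ~ List.range' c n → L.length = n := by
    intro L h
    simpa using h.length_eq
  split_ifs with h
  · rw [← card_W_true n c]
    congr 1
    ext L
    simp only [mem_W, and_true]
    refine and_congr_right fun hp => and_iff_left ?_
    rintro ⟨S, hS, hl⟩
    have h1 := hS.length_le
    rw [hlen hp] at h1
    simp only [Pat] at hl
    omega
  · rw [Finset.card_eq_zero, Finset.eq_empty_iff_forall_notMem]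
    intro L hL
    obtain ⟨hp, -, hb⟩ := mem_W.1 hL
    refine hb ⟨L.take l, List.take_sublist _ _, ?_⟩
    have := hlen hp
    simp only [Pat, List.length_take]
    omega

theorem coeff_catE (l n : ℕ) :
    PowerSeries.coeff n (catE l) = if n < l then (catalan n : ℚ) else 0 := by
  simp only [catE, map_sum, PowerSeries.coeff_C_mul, PowerSeries.coeff_X_pow, mul_ite, mul_one,
    mul_zero, Finset.sum_ite_eq, Finset.mem_range]

theorem card_W_bad (l m : ℕ) : ∀ n c,
    ((W (fun L => ¬ Bad l m L) c n).card : ℚ) = PowerSeries.coeff n (Rcf (catE l) m) := by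
  induction m with
  | zero =>
    intro n c
    rw [card_W_bad_zero, Rcf, coeff_catE]
    split_ifs <;> simp
  | succ m ihm =>
    have hR : Rcf (catE l) (m + 1) = 1 + PowerSeries.X *
        (Rcf (catE l) m * Rcf (catE l) (m + 1)) := by
      have h : PowerSeries.constantCoeff (1 - PowerSeries.X * Rcf (catE l) m) ≠ 0 := by simp
      have h2 := PowerSeries.mul_inv_cancel _ h
      change (1 - PowerSeries.X * Rcf (catE l) m) * Rcf (catE l) (m + 1) = 1 at h2
      linear_combination h2
    have hc : Compat (fun L => ¬ Bad l (m + 1) L) (fun L => ¬ Bad l m L) := by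
      intro A B M h1 h2 h3
      simp only
      rw [bad_glue l m A B M h1 h2 h3, not_or]
    intro n
    induction n using Nat.strong_induction_on with
    | _ n ih =>
      intro c
      cases n with
      | zero =>
        rw [card_W_zero, hR]
        · simp
        · rintro ⟨S, hS, S', x, rfl, -⟩
          simp at hS
      | succ n =>
        rw [card_W_succ _ _ hc, hR, map_add, PowerSeries.coeff_succ_X_mul, PowerSeries.coeff_mul]
        simp only [PowerSeries.coeff_one, Nat.succ_ne_zero, if_false, zero_add, Nat.cast_sum,
          Nat.cast_mul]
        refine Finset.sum_congr rfl fun p hp => ?_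
        rw [Finset.HasAntidiagonal.mem_antidiagonal] at hp
        rw [ihm, ih _ (by omega)]

/-! Bridge to permutations. -/

theorem pat_iff (l m : ℕ) : ∀ S : List ℕ, Pat l m S ↔ S.length = l + m ∧
    ∀ (i j : ℕ) (hj : j < S.length) (hij : i < j), l ≤ j → S[i] < S[j] := by
  induction m with
  | zero =>
    intro S
    simp only [Pat, add_zero]
    refine ⟨fun h => ⟨h, fun i j hj _ hl => by omega⟩, fun h => h.1⟩
  | succ m ih =>
    intro S
    simp only [Pat]
    constructor
    · rintro ⟨S', x, rfl, hP, hx⟩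
      obtain ⟨h1, h2⟩ := (ih S').1 hP
      refine ⟨by simp; omega, fun i j hj hij hl => ?_⟩
      simp only [List.length_append, List.length_singleton] at hj
      rw [List.getElem_append_left (by omega : i < S'.length)]
      by_cases hjj : j < S'.length
      · rw [List.getElem_append_left hjj]
        exact h2 i j hjj hij hl
      · obtain rfl : j = S'.length := by omega
        simp only [List.getElem_concat_length]
        exact hx _ (List.getElem_mem _)
    · rintro ⟨h1, h2⟩
      rcases List.eq_nil_or_concat S with rfl | ⟨S', x, rfl⟩
      · simp at h1
      · simp only [List.concat_eq_append, List.length_append, List.length_singleton] at h1 h2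
        refine ⟨S', x, by simp, (ih S').2 ⟨by omega, fun i j hj hij hl => ?_⟩, ?_⟩
        · have := h2 i j (by omega) hij hl
          rwa [List.getElem_append_left (by omega), List.getElem_append_left hj] at this
        · intro y hy
          obtain ⟨i, hi, rfl⟩ := List.getElem_of_mem hy
          have := h2 i S'.length (by omega) hi (by omega)
          rw [List.getElem_append_left hi] at this
          simpa using this

theorem sublist_ofFn {n : ℕ} (g : Fin n → ℕ) (k : ℕ) (S : List ℕ) :
    (S <+ List.ofFn g ∧ S.length = k) ↔
      ∃ f : Fin k → Fin n, StrictMono f ∧ S = List.ofFn fun i => g (f i) := by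
  constructor
  · rintro ⟨h, rfl⟩
    obtain ⟨f, hf⟩ := List.sublist_iff_exists_fin_orderEmbedding_get_eq.1 h
    refine ⟨fun i => Fin.cast (by simp) (f i), fun a b hab => ?_, ?_⟩
    · exact f.strictMono hab
    · apply List.ext_get (by simp)
      intro i h1 h2
      have := hf ⟨i, h1⟩
      rw [this]
      simp
      rfl
  · rintro ⟨f, hf, rfl⟩
    refine ⟨?_, by simp⟩
    rw [List.sublist_iff_exists_fin_orderEmbedding_get_eq]
    refine ⟨OrderEmbedding.ofStrictMono (fun i => Fin.cast (by simp) (f (Fin.cast (by simp) i)))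
      (fun a b hab => ?_), fun i => ?_⟩
    · have : Fin.cast (by simp) a < (Fin.cast (by simp) b : Fin k) := hab
      exact hf this
    · simp
      rfl

def toL {n : ℕ} (π : Equiv.Perm (Fin n)) : List ℕ := List.ofFn fun i => (π i : ℕ)

theorem av_toL {n : ℕ} (π : Equiv.Perm (Fin n)) : ¬ Contains p132 π ↔ Av (toL π) := by
  have e0 : p132 0 = 0 := rfl
  have e1 : p132 1 = 2 := rfl
  have e2 : p132 2 = 1 := rfl
  constructor
  · intro h x y z hs ⟨hxz, hzy⟩
    obtain ⟨f, hf, hS⟩ := (sublist_ofFn _ 3 _).1 ⟨hs, rfl⟩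
    simp [List.ofFn_succ] at hS
    obtain ⟨rfl, rfl, rfl⟩ := hS
    refine h ⟨f, hf, ?_⟩
    have h1 : π (f 0) < π (f 2) := hxz
    have h2 : π (f 2) < π (f 1) := hzy
    have h3 := h1.trans h2
    intro a b
    fin_cases a <;> fin_cases b <;> simp [e0, e1, e2, h1, h2, h3, h1.le, h2.le, h3.le]
  · rintro h ⟨f, hf, ho⟩
    refine h (π (f 0)) (π (f 1)) (π (f 2)) ((sublist_ofFn _ 3 _).2 ⟨f, hf, ?_⟩).1 ⟨?_, ?_⟩
    · simp [List.ofFn_succ]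
    · exact (ho 0 2).1 (by rw [e0, e2]; decide)
    · exact (ho 2 1).1 (by rw [e1, e2]; decide)

theorem exists_std {k n : ℕ} (g : Fin k → Fin n) (hg : Function.Injective g) :
    ∃ τ : Equiv.Perm (Fin k), ∀ a b, τ a < τ b ↔ g a < g b := by
  refine ⟨(Tuple.sort g)⁻¹, fun a b => ?_⟩
  have hm : StrictMono (g ∘ Tuple.sort g) :=
    (Tuple.monotone_sort g).strictMono_of_injective (hg.comp (Tuple.sort g).injective)
  have := hm.lt_iff_lt (a := (Tuple.sort g)⁻¹ a) (b := (Tuple.sort g)⁻¹ b)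
  simpa using this.symm

theorem bad_toL {n : ℕ} (l k : ℕ) (hlk : l ≤ k) (π : Equiv.Perm (Fin n)) :
    (∃ τ ∈ Ulk l k, Contains τ π) ↔ Bad l (k - l) (toL π) := by
  constructor
  · rintro ⟨τ, hτ, f, hf, ho⟩
    refine ⟨_, ((sublist_ofFn _ k _).2 ⟨f, hf, rfl⟩).1, (pat_iff _ _ _).2 ⟨by simp; omega, ?_⟩⟩
    intro i j hj hij hl
    simp only [List.length_ofFn] at hj
    simp only [List.getElem_ofFn]
    refine (ho ⟨i, by omega⟩ ⟨j, hj⟩).1 ?_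
    rw [hτ ⟨j, hj⟩ hl]
    by_contra hcon
    rw [not_lt] at hcon
    -- τ i ≥ j ≥ l so τ (τ i) = τ i, so τ i = i < j
    have h1 := hτ (τ ⟨i, by omega⟩) (hl.trans hcon)
    have h2 := τ.injective h1
    rw [h2] at hcon
    have : j ≤ i := hcon
    omega
  · rintro ⟨S, hS, hP⟩
    obtain ⟨h1, h2⟩ := (pat_iff _ _ _).1 hP
    obtain ⟨f, hf, rfl⟩ := (sublist_ofFn _ k _).1 ⟨hS, by omega⟩
    have hlt : ∀ a b : Fin k, a < b → l ≤ (b : ℕ) → π (f a) < π (f b) := by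
      intro a b hab hl
      have := h2 a b (by simp) hab hl
      simpa using this
    obtain ⟨τ, hτ⟩ := exists_std (fun i => π (f i)) (π.injective.comp hf.injective)
    refine ⟨τ, fun i hi => ?_, f, hf, hτ⟩
    have hset : (Finset.Iio (τ i)).map τ.symm.toEmbedding = Finset.Iio i := by
      ext j
      simp only [Finset.mem_map_equiv, Equiv.symm_symm, Finset.mem_Iio]
      rw [hτ]
      constructor
      · intro h
        by_contra hcon
        rcases (not_lt.1 hcon).eq_or_lt with rfl | hij
        · exact lt_irrefl _ h
        · have := hlt i j hij (hi.trans (le_of_lt hij))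
          exact lt_asymm h this
      · exact fun h => hlt j i h hi
    have := congrArg Finset.card hset
    simp at this
    exact Fin.ext this

theorem toL_injective {n : ℕ} : Function.Injective (toL (n := n)) := by
  intro π σ h
  have := List.ofFn_injective h
  ext i
  exact congrFun this i

theorem toL_perm {n : ℕ} (π : Equiv.Perm (Fin n)) : toL π ~ List.range' 0 n := by
  rw [List.perm_ext_iff_of_nodup]
  · intro x
    simp only [toL, List.mem_ofFn, List.mem_range'_1]
    constructor
    · rintro ⟨i, rfl⟩; simp
    · rintro h
      exact ⟨π.symm ⟨x, by omega⟩, by simp⟩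
  · exact List.nodup_ofFn.2 (Fin.val_injective.comp π.injective)
  · exact List.nodup_range' ..

theorem toL_surj {n : ℕ} (L : List ℕ) (h : L ~ List.range' 0 n) :
    ∃ π : Equiv.Perm (Fin n), toL π = L := by
  have hl : L.length = n := by simpa using h.length_eq
  subst hl
  have hlt : ∀ i : Fin L.length, L.get i < L.length := fun i => by
    have := h.mem_iff.1 (List.get_mem L i)
    simp only [List.mem_range'_1] at this; omega
  have hnd : L.Nodup := h.nodup_iff.2 (List.nodup_range' ..)
  have hinj : Function.Injective (fun i : Fin L.length => (⟨L.get i, hlt i⟩ : Fin L.length)) := by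
    intro a b hab
    exact List.nodup_iff_injective_get.1 hnd (by simpa using hab)
  refine ⟨Equiv.ofBijective _ (Finite.injective_iff_bijective.1 hinj), ?_⟩
  simp [toL]

theorem card_bridge (l k n : ℕ) (hlk : l ≤ k) :
    Nat.card {π : Equiv.Perm (Fin n) //
        ¬ Contains p132 π ∧ ∀ τ ∈ Ulk l k, ¬ Contains τ π}
      = (W (fun L => ¬ Bad l (k - l) L) 0 n).card := by
  rw [← Nat.card_eq_finsetCard]
  have hiff : ∀ π : Equiv.Perm (Fin n), (¬ Contains p132 π ∧ ∀ τ ∈ Ulk l k, ¬ Contains τ π) ↔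
      toL π ∈ W (fun L => ¬ Bad l (k - l) L) 0 n := by
    intro π
    rw [mem_W, av_toL, ← bad_toL l k hlk]
    simp [toL_perm π]
  refine Nat.card_congr (Equiv.ofBijective
    (fun π => ⟨toL π.1, (hiff π.1).1 π.2⟩) ⟨?_, ?_⟩)
  · intro a b hab
    exact Subtype.ext (toL_injective (congrArg Subtype.val hab))
  · rintro ⟨L, hL⟩
    obtain ⟨π, rfl⟩ := toL_surj L (mem_W.1 hL).1
    exact ⟨⟨π, (hiff π).2 hL⟩, rfl⟩

end Aux7

/-- For `k ≥ l ≥ 1`, the generating function for `132`-avoiding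
permutations avoiding every pattern in `U_l^k` equals the continued fraction
`R_{k−l;E}` with `E = Σ_{j=0}^{l−1} C_j X^j`. -/
theorem stmt7 (k l : ℕ) (hl : 1 ≤ l) (hlk : l ≤ k) :
    (PowerSeries.mk fun n => ((Nat.card {π : Equiv.Perm (Fin n) //
        ¬ Contains p132 π ∧ ∀ τ ∈ Ulk l k, ¬ Contains τ π} : ℕ) : ℚ))
      = Rcf (catE l) (k - l) := by
  ext n
  rw [PowerSeries.coeff_mk, Aux7.card_bridge l k n hlk, Aux7.card_W_bad]
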